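/- The kernel function Γ attains a minimum on [0,∞): there exists h_n* ≥ 0 such that Γ(h_n*) ≤ Γ(h) for all h ≥ 0. (This is the optimal normalized hovering altitude, determined only by the environment.) -/

import Mathlib

open Real MeasureTheory intervalIntegral

/-!
Splitting `L̄` along `R² + h²` gives `Γ(h) = A(h) + h² B(h)` with `A(h) = c ∫₀¹ R³ G(R,h) dR` and
`B(h) = c ∫₀¹ R G(R,h) dR`, where `c = 2πKN₀` and `G = η₁ + P₀ (η₀ - η₁)`. Since `P₀` takes values
in `[0,1]`, `G` lies between `min η₀ η₁` and `max η₀ η₁`. Hence `A` and `B` are continuous by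
dominated convergence, `A` is bounded and `B` is bounded away from `0`, so `Γ` is coercive.
-/

open Set Filter

lemma exists_isMinOn_add_norm_sq_mul {E : Type*} [SeminormedAddCommGroup E] [ProperSpace E]
    {s : Set E} (hs : IsClosed s) (hne : s.Nonempty) {A B : E → ℝ} (hA : ContinuousOn A s)
    (hB : ContinuousOn B s) {c m : ℝ} (hm : 0 < m) (hcA : ∀ x ∈ s, c ≤ A x)
    (hmB : ∀ x ∈ s, m ≤ B x) :
    ∃ x ∈ s, IsMinOn (fun x => A x + ‖x‖ ^ 2 * B x) s x := by
  obtain ⟨x₀, hx₀⟩ := hne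
  have coercive : Tendsto (fun x : E => c + ‖x‖ ^ 2 * m) (cocompact E) atTop :=
    tendsto_atTop_add_const_left _ _ <|
      ((tendsto_pow_atTop two_ne_zero).comp tendsto_norm_cocompact_atTop).atTop_mul_const hm
  refine ContinuousOn.exists_isMinOn' (by fun_prop) hs hx₀ ?_
  filter_upwards [(coercive.eventually_ge_atTop _).filter_mono inf_le_left,
    mem_inf_of_right (mem_principal_self s)] with x hx hxs
  refine hx.trans ?_
  gcongr
  · exact hcA x hxs
  · exact hmB x hxs

section WeightedIntegral

variable {α : Type*} [MeasurableSpace α] {μ : Measure α} {w : α → ℝ}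

lemma continuousOn_integral_mul_of_norm_le {X : Type*} [TopologicalSpace X]
    [FirstCountableTopology X] {s : Set X} (hw : Integrable w μ) {G : X → α → ℝ} {M : ℝ}
    (hmeas : ∀ x ∈ s, AEStronglyMeasurable (G x) μ) (hM : ∀ x ∈ s, ∀ᵐ r ∂μ, ‖G x r‖ ≤ M)
    (hcont : ∀ᵐ r ∂μ, ContinuousOn (fun x => G x r) s) :
    ContinuousOn (fun x => ∫ r, w r * G x r ∂μ) s := by
  refine continuousOn_of_dominated (bound := fun r => ‖w r‖ * M)
    (fun x hx => hw.aestronglyMeasurable.mul (hmeas x hx)) (fun x hx => ?_)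
    (hw.norm.mul_const M) (hcont.mono fun r hr => continuousOn_const.mul hr)
  filter_upwards [hM x hx] with r hr
  rw [norm_mul]
  gcongr

lemma norm_integral_mul_le_of_norm_le (hw : Integrable w μ) {g : α → ℝ} {M : ℝ}
    (hg : ∀ᵐ r ∂μ, ‖g r‖ ≤ M) : ‖∫ r, w r * g r ∂μ‖ ≤ (∫ r, ‖w r‖ ∂μ) * M := by
  rw [← MeasureTheory.integral_mul_const]
  refine norm_integral_le_of_norm_le (hw.norm.mul_const M) ?_
  filter_upwards [hg] with r hr
  rw [norm_mul]
  gcongr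

lemma integral_mul_const_le_integral_mul (hw : Integrable w μ) (hw₀ : 0 ≤ᵐ[μ] w) {g : α → ℝ}
    {m : ℝ} (hwg : Integrable (fun r => w r * g r) μ) (hg : ∀ᵐ r ∂μ, m ≤ g r) :
    (∫ r, w r ∂μ) * m ≤ ∫ r, w r * g r ∂μ := by
  rw [← MeasureTheory.integral_mul_const]
  refine integral_mono_ae (hw.mul_const m) hwg ?_
  filter_upwards [hw₀, hg] with r hr₀ hr
  exact mul_le_mul_of_nonneg_left hr hr₀

lemma exists_isMinOn_integral_add_norm_sq_mul {E : Type*} [SeminormedAddCommGroup E]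
    [ProperSpace E] {s : Set E} (hs : IsClosed s) (hne : s.Nonempty) {u : α → ℝ}
    (hu : Integrable u μ) (hw : Integrable w μ) (hw₀ : 0 ≤ᵐ[μ] w) (hw_pos : 0 < ∫ r, w r ∂μ)
    {G : E → α → ℝ} {m M : ℝ} (hm : 0 < m) (hmeas : ∀ x ∈ s, AEStronglyMeasurable (G x) μ)
    (hG : ∀ x ∈ s, ∀ᵐ r ∂μ, G x r ∈ Icc m M)
    (hcont : ∀ᵐ r ∂μ, ContinuousOn (fun x => G x r) s) :
    ∃ x ∈ s, IsMinOn (fun x => ∫ r, (u r + ‖x‖ ^ 2 * w r) * G x r ∂μ) s x := by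
  have hM : ∀ x ∈ s, ∀ᵐ r ∂μ, ‖G x r‖ ≤ M := fun x hx =>
    (hG x hx).mono fun r hr => (Real.norm_of_nonneg (hm.le.trans hr.1)).trans_le hr.2
  have huG : ∀ x ∈ s, Integrable (fun r => u r * G x r) μ := fun x hx =>
    hu.mul_bdd (hmeas x hx) (hM x hx)
  have hwG : ∀ x ∈ s, Integrable (fun r => w r * G x r) μ := fun x hx =>
    hw.mul_bdd (hmeas x hx) (hM x hx)
  have split : EqOn (fun x => ∫ r, (u r + ‖x‖ ^ 2 * w r) * G x r ∂μ)
      (fun x => ∫ r, u r * G x r ∂μ + ‖x‖ ^ 2 * ∫ r, w r * G x r ∂μ) s := fun x hx => by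
    simp only [add_mul, mul_assoc]
    rw [integral_add (huG x hx) ((hwG x hx).const_mul _), MeasureTheory.integral_const_mul]
  obtain ⟨x, hx, hmin⟩ := exists_isMinOn_add_norm_sq_mul hs hne
    (continuousOn_integral_mul_of_norm_le hu hmeas hM hcont)
    (continuousOn_integral_mul_of_norm_le hw hmeas hM hcont) (mul_pos hw_pos hm)
    (fun x hx => (abs_le.1 (norm_integral_mul_le_of_norm_le hu (hM x hx))).1)
    (fun x hx => integral_mul_const_le_integral_mul hw hw₀ (hwG x hx)
      ((hG x hx).mono fun r hr => hr.1))
  exact ⟨x, hx, hmin.congr (eventuallyEq_of_mem (mem_principal_self s) split.symm) (split hx).symm⟩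

end WeightedIntegral

lemma add_mul_sub_mem_Icc_min_max {p : ℝ} (hp : p ∈ Icc (0 : ℝ) 1) (u v : ℝ) :
    v + p * (u - v) ∈ Icc (min u v) (max u v) :=
  (convex_Icc _ _).add_smul_sub_mem ⟨min_le_right u v, le_max_right u v⟩
    ⟨min_le_left u v, le_max_left u v⟩ hp

lemma one_div_one_add_mul_exp_neg {a : ℝ} (ha : 0 < a) (t : ℝ) :
    1 / (1 + a * exp (-t)) = sigmoid (t - log a) := by
  rw [sigmoid_def, neg_sub, sub_eq_add_neg, exp_add, exp_log ha, one_div]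

/-- The probability of a line of sight from altitude `h` to a user at horizontal distance `R`, in
an environment with parameters `a` and `b`; the elevation angle is in degrees. For `R = 0` the
convention `h / 0 = 0` makes that angle `0` rather than `90`. -/
noncomputable def losProbability (a b R h : ℝ) : ℝ :=
  1 / (1 + a * exp (-b * ((180 / π) * arctan (h / R) - a)))

lemma losProbability_eq_sigmoid {a : ℝ} (ha : 0 < a) (b R h : ℝ) :
    losProbability a b R h = sigmoid (b * (180 / π * arctan (h / R) - a) - log a) := by
  rw [losProbability, neg_mul, one_div_one_add_mul_exp_neg ha]

lemma losProbability_mem_Icc {a : ℝ} (ha : 0 < a) (b R h : ℝ) :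
    losProbability a b R h ∈ Icc 0 1 :=
  losProbability_eq_sigmoid ha b R h ▸ ⟨sigmoid_nonneg _, sigmoid_le_one _⟩

lemma continuous_losProbability {a : ℝ} (ha : 0 < a) (b R : ℝ) :
    Continuous (losProbability a b R) := by
  simp only [funext (losProbability_eq_sigmoid ha b R)]
  exact continuous_sigmoid.comp (by fun_prop)

lemma measurable_losProbability_left (a b h : ℝ) : Measurable (losProbability a b · h) := by
  unfold losProbability
  fun_prop

theorem kernel_function_attains_minimum_general {η₀ η₁ K N₀ : ℝ} (hη₀ : 0 < η₀) (hη₁ : 0 < η₁)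
    (hK : 0 < K) (hN₀ : 0 < N₀) {P₀ L : ℝ → ℝ → ℝ} {Γ : ℝ → ℝ}
    (hmeas : ∀ h, 0 ≤ h → AEStronglyMeasurable (P₀ · h) (volume.restrict (Ioc 0 1)))
    (hcont : ∀ R ∈ Ioc 0 1, ContinuousOn (P₀ R) (Ici 0))
    (hP₀ : ∀ R ∈ Ioc 0 1, ∀ h, 0 ≤ h → P₀ R h ∈ Icc 0 1)
    (hL : ∀ R h : ℝ, L R h = K * (R ^ 2 + h ^ 2) * (η₁ + P₀ R h * (η₀ - η₁)))
    (hΓ : ∀ x : ℝ, Γ x = ∫ R in (0 : ℝ)..(1 : ℝ), 2 * π * R * L R x * N₀) :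
    ∃ hn : ℝ, 0 ≤ hn ∧ ∀ h : ℝ, 0 ≤ h → Γ hn ≤ Γ h := by
  set c := 2 * π * K * N₀ with hc
  have hc_pos : 0 < c := by positivity
  have weight_pos : 0 < ∫ R in Ioc (0 : ℝ) 1, c * R := by
    rw [← integral_of_le zero_le_one, intervalIntegral.integral_const_mul, integral_id]
    linarith
  have hΓ' : Γ = fun x => ∫ R in Ioc (0 : ℝ) 1,
      (c * R ^ 3 + ‖x‖ ^ 2 * (c * R)) * (η₁ + P₀ R x * (η₀ - η₁)) := by
    ext x
    rw [hΓ, integral_of_le zero_le_one]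
    congr 1 with R
    rw [hL, Real.norm_eq_abs, sq_abs, hc]
    ring
  obtain ⟨y, hy, hmin⟩ := exists_isMinOn_integral_add_norm_sq_mul
    (u := fun R => c * R ^ 3) (w := fun R => c * R) (G := fun x R => η₁ + P₀ R x * (η₀ - η₁))
    isClosed_Ici nonempty_Ici
    (Continuous.integrableOn_Ioc (by fun_prop)) (Continuous.integrableOn_Ioc (by fun_prop))
    (ae_restrict_of_forall_mem measurableSet_Ioc fun R hR => mul_nonneg hc_pos.le hR.1.le)
    weight_pos (lt_min hη₀ hη₁)
    (fun x hx => ((hmeas x hx).mul_const _).const_add _)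
    (fun x hx => ae_restrict_of_forall_mem measurableSet_Ioc fun R hR =>
      add_mul_sub_mem_Icc_min_max (hP₀ R hR x hx) η₀ η₁)
    (ae_restrict_of_forall_mem measurableSet_Ioc fun R hR =>
      continuousOn_const.add ((hcont R hR).mul continuousOn_const))
  exact ⟨y, hy, fun h hh => hΓ' ▸ hmin hh⟩

/-- The kernel function `Γ` attains a minimum on `[0,∞)`: there exists
`h_n* ≥ 0` with `Γ(h_n*) ≤ Γ(h)` for all `h ≥ 0`. -/
theorem kernel_function_attains_minimum
    (a b η₀ η₁ K N₀ : ℝ) (ha : 0 < a) (hb : 0 < b) (hη₀ : 0 < η₀) (hη₁ : 0 < η₁)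
    (hK : 0 < K) (hN₀ : 0 < N₀)
    (θ P₀ L : ℝ → ℝ → ℝ) (Γ : ℝ → ℝ)
    (hθ : ∀ R h : ℝ, θ R h = (180 / π) * arctan (h / R))
    (hP₀ : ∀ R h : ℝ, P₀ R h = 1 / (1 + a * exp (-b * (θ R h - a))))
    (hL : ∀ R h : ℝ, L R h = K * (R ^ 2 + h ^ 2) * (η₁ + P₀ R h * (η₀ - η₁)))
    (hΓ : ∀ x : ℝ, Γ x = ∫ R in (0 : ℝ)..(1 : ℝ), 2 * π * R * L R x * N₀) :
    ∃ hn : ℝ, 0 ≤ hn ∧ ∀ h : ℝ, 0 ≤ h → Γ hn ≤ Γ h := by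
  obtain rfl : P₀ = losProbability a b := funext₂ fun R h => by rw [hP₀, hθ, losProbability]
  exact kernel_function_attains_minimum_general hη₀ hη₁ hK hN₀
    (fun h _ => (measurable_losProbability_left a b h).aestronglyMeasurable)
    (fun R _ => (continuous_losProbability ha b R).continuousOn)
    (fun R _ h _ => losProbability_mem_Icc ha b R h) hL hΓ
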